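/- Let n ≥ 2. The function κ ↦ √(σ₂(κ)) is concave on the Gårding cone Γ₂ = {κ ∈ ℝⁿ : σ₁(κ) > 0 and σ₂(κ) > 0}: for all κ, μ ∈ Γ₂ and t ∈ [0,1], √(σ₂(tκ + (1−t)μ)) ≥ t√(σ₂(κ)) + (1−t)√(σ₂(μ)). -/

import Mathlib

open Finset

/-- First elementary symmetric polynomial: σ₁(κ) = ∑ i, κ i. -/
noncomputable def sigma1 {n : ℕ} (κ : Fin n → ℝ) : ℝ := ∑ i, κ i

/-- Second elementary symmetric polynomial: σ₂(κ) = ∑_{i<j} κ i * κ j. -/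
noncomputable def sigma2 {n : ℕ} (κ : Fin n → ℝ) : ℝ :=
  ∑ p ∈ Finset.univ.filter (fun p : Fin n × Fin n => p.1 < p.2), κ p.1 * κ p.2

/-- Polarization of σ₂: σ_{1,1}(κ, μ) = (1/2)(σ₁(κ)σ₁(μ) − ∑ i, κ i * μ i). -/
noncomputable def sigma11 {n : ℕ} (κ μ : Fin n → ℝ) : ℝ :=
  (1 / 2) * (sigma1 κ * sigma1 μ - ∑ i, κ i * μ i)

/-!
In the form `2 σ₂ = σ₁² - |κ|²`, `σ₂` is a Lorentzian quadratic form. The inequality of Aczél, the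
reverse Cauchy–Schwarz inequality for such forms, bounds its polarization from below:
`√σ₂(κ) √σ₂(μ) ≤ σ₁₁(κ, μ)` on the cone `σ₁ ≥ 0`, `σ₂ ≥ 0`. Hence the expansion of
`σ₂(s κ + t μ)` dominates the square `(s √σ₂(κ) + t √σ₂(μ))²`.
-/

theorem sq_sum_eq_sum_sq_add_two_mul_sum_lt {ι R : Type*} [LinearOrder ι] [CommSemiring R]
    (s : Finset ι) (f : ι → R) :
    (∑ i ∈ s, f i) ^ 2 =
      ∑ i ∈ s, f i ^ 2 + 2 * ∑ p ∈ s ×ˢ s with p.1 < p.2, f p.1 * f p.2 := by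
  have diagonal : ∑ p ∈ s ×ˢ s with p.1 = p.2, f p.1 * f p.2 = ∑ i ∈ s, f i ^ 2 := by
    simp [sum_filter, sum_product, sq]
  have lower_eq_upper : ∑ p ∈ s ×ˢ s with p.2 < p.1, f p.1 * f p.2 =
      ∑ p ∈ s ×ˢ s with p.1 < p.2, f p.1 * f p.2 := by
    simp only [sum_filter]
    rw [sum_product, sum_product_right]
    simp only [mul_comm]
  have trichotomy (p : ι × ι) : f p.1 * f p.2 =
      (if p.1 = p.2 then f p.1 * f p.2 else 0) + (if p.1 < p.2 then f p.1 * f p.2 else 0) +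
        (if p.2 < p.1 then f p.1 * f p.2 else 0) := by
    rcases lt_trichotomy p.1 p.2 with h | h | h
    · simp [h, h.ne, h.not_gt]
    · simp [h]
    · simp [h, h.ne', h.not_gt]
  calc (∑ i ∈ s, f i) ^ 2
      = ∑ p ∈ s ×ˢ s, f p.1 * f p.2 := by rw [sq, sum_mul_sum, sum_product]
    _ = ∑ p ∈ s ×ˢ s with p.1 = p.2, f p.1 * f p.2 +
          ∑ p ∈ s ×ˢ s with p.1 < p.2, f p.1 * f p.2 +
            ∑ p ∈ s ×ˢ s with p.2 < p.1, f p.1 * f p.2 := by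
        simp only [sum_filter, ← sum_add_distrib, ← trichotomy]
    _ = ∑ i ∈ s, f i ^ 2 + 2 * ∑ p ∈ s ×ˢ s with p.1 < p.2, f p.1 * f p.2 := by
        rw [diagonal, lower_eq_upper, two_mul, add_assoc]

theorem aczel_inequality {ι : Type*} (s : Finset ι) (f g : ι → ℝ) {a b : ℝ}
    (ha : 0 ≤ a) (hb : 0 ≤ b) (hf : ∑ i ∈ s, f i ^ 2 ≤ a ^ 2) (hg : ∑ i ∈ s, g i ^ 2 ≤ b ^ 2) :
    √(a ^ 2 - ∑ i ∈ s, f i ^ 2) * √(b ^ 2 - ∑ i ∈ s, g i ^ 2) ≤ a * b - ∑ i ∈ s, f i * g i := by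
  set F := ∑ i ∈ s, f i ^ 2
  set G := ∑ i ∈ s, g i ^ 2
  have hF : 0 ≤ F := sum_nonneg fun i _ => sq_nonneg (f i)
  have hG : 0 ≤ G := sum_nonneg fun i _ => sq_nonneg (g i)
  have sum_le : ∑ i ∈ s, f i * g i ≤ √F * √G := Real.sum_mul_le_sqrt_mul_sqrt s f g
  have planar_cauchy_schwarz : √F * √G + √(a ^ 2 - F) * √(b ^ 2 - G) ≤ a * b := by
    have := Real.sum_sqrt_mul_sqrt_le univ (f := ![F, a ^ 2 - F]) (g := ![G, b ^ 2 - G])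
      (by simp [Fin.forall_fin_two, hF, hf]) (by simp [Fin.forall_fin_two, hG, hg])
    simpa [Fin.sum_univ_two, Real.sqrt_sq, ha, hb] using this
  linarith

section Sigma

variable {n : ℕ} (κ μ : Fin n → ℝ)

theorem two_mul_sigma2 : 2 * sigma2 κ = sigma1 κ ^ 2 - ∑ i, κ i ^ 2 := by
  rw [sigma1, sq_sum_eq_sum_sq_add_two_mul_sum_lt, univ_product_univ, add_sub_cancel_left, sigma2]

theorem sigma1_smul_add_smul (s t : ℝ) :
    sigma1 (s • κ + t • μ) = s * sigma1 κ + t * sigma1 μ := by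
  simp [sigma1, sum_add_distrib, mul_sum]

theorem sigma2_smul_add_smul (s t : ℝ) :
    sigma2 (s • κ + t • μ) =
      s ^ 2 * sigma2 κ + 2 * (s * t) * sigma11 κ μ + t ^ 2 * sigma2 μ := by
  have sum_sq : ∑ i, (s • κ + t • μ) i ^ 2 =
      s ^ 2 * ∑ i, κ i ^ 2 + 2 * (s * t) * ∑ i, κ i * μ i + t ^ 2 * ∑ i, μ i ^ 2 := by
    simp only [mul_sum, ← sum_add_distrib, Pi.add_apply, Pi.smul_apply, smul_eq_mul]
    exact sum_congr rfl fun i _ => by ring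
  have expansion := two_mul_sigma2 (s • κ + t • μ)
  rw [sigma1_smul_add_smul, sum_sq] at expansion
  rw [sigma11]
  linear_combination (expansion - s ^ 2 * two_mul_sigma2 κ - t ^ 2 * two_mul_sigma2 μ) / 2

variable {κ μ}

theorem sqrt_sigma2_mul_sqrt_sigma2_le_sigma11 (hκ1 : 0 ≤ sigma1 κ) (hκ2 : 0 ≤ sigma2 κ)
    (hμ1 : 0 ≤ sigma1 μ) (hμ2 : 0 ≤ sigma2 μ) :
    √(sigma2 κ) * √(sigma2 μ) ≤ sigma11 κ μ := by
  have reverse_cauchy_schwarz :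
      √(2 * sigma2 κ) * √(2 * sigma2 μ) ≤ sigma1 κ * sigma1 μ - ∑ i, κ i * μ i := by
    rw [two_mul_sigma2, two_mul_sigma2]
    exact aczel_inequality univ κ μ hκ1 hμ1
      (by linarith [two_mul_sigma2 κ]) (by linarith [two_mul_sigma2 μ])
  calc √(sigma2 κ) * √(sigma2 μ)
      = 1 / 2 * (√(2 * sigma2 κ) * √(2 * sigma2 μ)) := by
        rw [Real.sqrt_mul zero_le_two, Real.sqrt_mul zero_le_two, mul_mul_mul_comm,
          Real.mul_self_sqrt zero_le_two]
        ring
    _ ≤ sigma11 κ μ := by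
        rw [sigma11]
        gcongr

theorem sqrt_sigma2_concave_general (hκ1 : 0 ≤ sigma1 κ) (hκ2 : 0 ≤ sigma2 κ)
    (hμ1 : 0 ≤ sigma1 μ) (hμ2 : 0 ≤ sigma2 μ) {s t : ℝ} (hs : 0 ≤ s) (ht : 0 ≤ t) :
    s * √(sigma2 κ) + t * √(sigma2 μ) ≤ √(sigma2 (s • κ + t • μ)) := by
  apply Real.le_sqrt_of_sq_le
  calc (s * √(sigma2 κ) + t * √(sigma2 μ)) ^ 2
      = s ^ 2 * sigma2 κ + 2 * (s * t) * (√(sigma2 κ) * √(sigma2 μ)) + t ^ 2 * sigma2 μ := by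
        rw [add_sq, mul_pow, mul_pow, Real.sq_sqrt hκ2, Real.sq_sqrt hμ2]
        ring
    _ ≤ s ^ 2 * sigma2 κ + 2 * (s * t) * sigma11 κ μ + t ^ 2 * sigma2 μ := by
        gcongr
        exact sqrt_sigma2_mul_sqrt_sigma2_le_sigma11 hκ1 hκ2 hμ1 hμ2
    _ = sigma2 (s • κ + t • μ) := (sigma2_smul_add_smul κ μ s t).symm

end Sigma

/-- √σ₂ is concave on the Gårding cone Γ₂. -/
theorem sqrt_sigma2_concave {n : ℕ} (hn : 2 ≤ n) (κ μ : Fin n → ℝ)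
    (hκ1 : sigma1 κ > 0) (hκ2 : sigma2 κ > 0)
    (hμ1 : sigma1 μ > 0) (hμ2 : sigma2 μ > 0)
    (t : ℝ) (ht0 : 0 ≤ t) (ht1 : t ≤ 1) :
    Real.sqrt (sigma2 (t • κ + (1 - t) • μ)) ≥
      t * Real.sqrt (sigma2 κ) + (1 - t) * Real.sqrt (sigma2 μ) :=
  sqrt_sigma2_concave_general hκ1.le hκ2.le hμ1.le hμ2.le ht0 (sub_nonneg.2 ht1)
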